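/- Let η > 0 and v(p) = p/√(1+p²). Let A, B, E : ℝ × ℝ → ℝ be continuous and 1-periodic in their second argument, with E continuously differentiable. Let f : ℝ × ℝ × ℝ → ℝ be continuously differentiable, 1-periodic in its second argument, with f(t,x,p) = 0 whenever |p| ≥ P for some P > 0, and define j(t,x) := ∫_ℝ v(p)·f(t,x,p) dp. Assume f satisfies the Vlasov equation ∂f/∂t + v(p)·∂f/∂x + F(t,x)·∂f/∂p = 0 with Lorentz force F = −(E + A·B), and assume the Ampère relation ∂E/∂t(t,x) = η⁻²·j(t,x) holds at every point. Then the longitudinal energy WL(t) := ∫₀¹ ∫_ℝ (√(1+p²) − 1)·f(t,x,p) dp dx + (η²/2)·∫₀¹ E(t,x)² dx satisfies d/dt WL(t) = −∫₀¹ A(t,x)·B(t,x)·j(t,x) dx for all t. -/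

import Mathlib

open MeasureTheory

/-!
Multiplying the Vlasov equation by a weight `w p` and integrating in `p` gives the local balance
law `∂ₜ ∫ w f dp + ∂ₓ ∫ w v f dp = F ∫ w' f dp`. Over a period in `x` the flux term integrates to
zero. For the kinetic energy `w = √(1 + p²) - 1` one has `w' = v`, so the kinetic energy changes at
the rate `∫ F j dx`, the power of the force. By the Ampère relation the potential energy changes at
the rate `∫ E j dx`, which cancels the contribution of `E` to `F = -(E + A B)`.
-/

section ParametricIntegral

variable {𝕜 Y V : Type*} [RCLike 𝕜] [TopologicalSpace Y] [MeasurableSpace Y]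
  [OpensMeasurableSpace Y] [NormedAddCommGroup V] [NormedSpace ℝ V] [NormedSpace 𝕜 V]
  [T2Space Y] [SecondCountableTopologyEither Y V] {μ : Measure Y} [IsFiniteMeasureOnCompacts μ]
  {F F' : 𝕜 → Y → V} {k : Set Y}

lemma hasDerivAt_setIntegral_of_continuous (hk : IsCompact k)
    (hderiv : ∀ s y, HasDerivAt (F · y) (F' s y) s)
    (hF : ∀ s, Continuous (F s)) (hF' : Continuous F'.uncurry) (t : 𝕜) :
    HasDerivAt (fun s ↦ ∫ y in k, F s y ∂μ) (∫ y in k, F' t y ∂μ) t := by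
  obtain ⟨C, hC⟩ := ((isCompact_closedBall t 1).prod hk).exists_bound_of_continuousOn
    hF'.continuousOn
  have hF't : Continuous (F' t) := hF'.comp (Continuous.prodMk_right t)
  have hbound : ∀ᵐ y ∂μ.restrict k, ∀ s ∈ Metric.closedBall t 1, ‖F' s y‖ ≤ C :=
    (ae_restrict_iff' hk.measurableSet).2 <| .of_forall fun y hy s hs ↦ hC (s, y) ⟨hs, hy⟩
  exact (hasDerivAt_integral_of_dominated_loc_of_deriv_le
    (Metric.closedBall_mem_nhds t one_pos)
    (.of_forall fun s ↦ (hF s).aestronglyMeasurable)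
    ((hF t).continuousOn.integrableOn_compact hk) hF't.aestronglyMeasurable hbound
    (integrableOn_const hk.measure_ne_top) (.of_forall fun y s _ ↦ hderiv s y)).2

lemma hasDerivAt_integral_of_continuous_of_compact_support (hk : IsCompact k)
    (hderiv : ∀ s y, HasDerivAt (F · y) (F' s y) s) (hF : ∀ s, Continuous (F s))
    (hF' : Continuous F'.uncurry) (hsupp : ∀ s, ∀ y ∉ k, F s y = 0) (t : 𝕜) :
    HasDerivAt (fun s ↦ ∫ y, F s y ∂μ) (∫ y, F' t y ∂μ) t := by
  have hsupp' : ∀ y ∉ k, F' t y = 0 := fun y hy ↦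
    (hderiv t y).unique <| (hasDerivAt_const t (0 : V)).congr_of_eventuallyEq <|
      .of_forall fun s ↦ hsupp s y hy
  have h := hasDerivAt_setIntegral_of_continuous (μ := μ) hk hderiv hF hF' t
  rw [setIntegral_eq_integral_of_forall_compl_eq_zero hsupp'] at h
  simpa only [setIntegral_eq_integral_of_forall_compl_eq_zero (hsupp _)] using h

lemma hasDerivAt_intervalIntegral_of_continuous {F F' : 𝕜 → ℝ → V}
    (hderiv : ∀ s x, HasDerivAt (F · x) (F' s x) s)
    (hF : ∀ s, Continuous (F s)) (hF' : Continuous F'.uncurry) (a b : ℝ) (t : 𝕜) :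
    HasDerivAt (fun s ↦ ∫ x in a..b, F s x) (∫ x in a..b, F' t x) t := by
  have hIcc (c d : ℝ) := hasDerivAt_setIntegral_of_continuous (μ := volume)
    (isCompact_Icc (a := c) (b := d)) hderiv hF hF' t
  simp only [integral_Icc_eq_integral_Ioc] at hIcc
  exact (hIcc a b).sub (hIcc b a)

end ParametricIntegral

lemma continuous_deriv_of_contDiff_uncurry {𝕜 X V : Type*} [NontriviallyNormedField 𝕜]
    [NormedAddCommGroup X] [NormedSpace 𝕜 X] [NormedAddCommGroup V] [NormedSpace 𝕜 V]
    {f : X → 𝕜 → V} {g : X → 𝕜} (hf : ContDiff 𝕜 1 f.uncurry) (hg : Continuous g) :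
    Continuous fun x ↦ deriv (f x) (g x) :=
  (Continuous.fderiv_one hf hg).clm_apply continuous_const

lemma integral_mul_deriv_eq_neg_of_hasCompactSupport {w w' φ : ℝ → ℝ}
    (hw : ∀ p, HasDerivAt w (w' p) p) (hw' : Continuous w') (hφ : ContDiff ℝ 1 φ)
    (hsupp : HasCompactSupport φ) :
    ∫ p, w p * deriv φ p = -∫ p, w' p * φ p := by
  have hwc : Continuous w := continuous_iff_continuousAt.2 fun p ↦ (hw p).continuousAt
  exact integral_mul_deriv_eq_deriv_mul_of_integrable (fun p _ ↦ hw p)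
    (fun p _ ↦ (hφ.differentiable one_ne_zero p).hasDerivAt)
    ((hwc.mul (hφ.continuous_deriv le_rfl)).integrable_of_hasCompactSupport hsupp.deriv.mul_left)
    ((hw'.mul hφ.continuous).integrable_of_hasCompactSupport hsupp.mul_left)
    ((hwc.mul hφ.continuous).integrable_of_hasCompactSupport hsupp.mul_left)

/-- The partial derivative `∂f/∂t` of a phase-space function `f(t, x, p)`. -/
noncomputable def timeDeriv (f : ℝ × ℝ × ℝ → ℝ) (z : ℝ × ℝ × ℝ) : ℝ :=
  deriv (fun s ↦ f (s, z.2.1, z.2.2)) z.1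

/-- The partial derivative `∂f/∂x` of a phase-space function `f(t, x, p)`. -/
noncomputable def spaceDeriv (f : ℝ × ℝ × ℝ → ℝ) (z : ℝ × ℝ × ℝ) : ℝ :=
  deriv (fun y ↦ f (z.1, y, z.2.2)) z.2.1

/-- The partial derivative `∂f/∂p` of a phase-space function `f(t, x, p)`. -/
noncomputable def momentumDeriv (f : ℝ × ℝ × ℝ → ℝ) (z : ℝ × ℝ × ℝ) : ℝ :=
  deriv (fun q ↦ f (z.1, z.2.1, q)) z.2.2

/-- The density `(t, x) ↦ ∫ w(p) f(t, x, p) dp` of the moment of `f` with weight `w`: the current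
for `w = v`, the kinetic energy density for `w = √(1 + p²) - 1`. -/
noncomputable def moment (w : ℝ → ℝ) (f : ℝ × ℝ × ℝ → ℝ) (z : ℝ × ℝ) : ℝ :=
  ∫ p, w p * f (z.1, z.2, p)

/-- `f` is supported in a compact set of momenta, the same for all times and positions. -/
def HasCompactMomentumSupport (f : ℝ × ℝ × ℝ → ℝ) : Prop :=
  ∃ k : Set ℝ, IsCompact k ∧ ∀ t x, ∀ p ∉ k, f (t, x, p) = 0

/-- `f` is a classical solution, compactly supported in momentum, of the Vlasov equation
`∂f/∂t + v ∂f/∂x + F ∂f/∂p = 0` with velocity law `v(p)` and force field `F(t, x)`. -/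
structure IsVlasovSolution (v : ℝ → ℝ) (F : ℝ × ℝ → ℝ) (f : ℝ × ℝ × ℝ → ℝ) : Prop where
  contDiff : ContDiff ℝ 1 f
  hasCompactMomentumSupport : HasCompactMomentumSupport f
  vlasov : ∀ t x p, timeDeriv f (t, x, p) + v p * spaceDeriv f (t, x, p)
    + F (t, x) * momentumDeriv f (t, x, p) = 0

section Moment

variable {w w' : ℝ → ℝ} {f : ℝ × ℝ × ℝ → ℝ}

lemma continuous_timeDeriv (hf : ContDiff ℝ 1 f) : Continuous (timeDeriv f) :=
  continuous_deriv_of_contDiff_uncurry (f := fun (z : ℝ × ℝ × ℝ) s ↦ f (s, z.2.1, z.2.2))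
    (by simp only [Function.uncurry_def]; fun_prop) continuous_fst

lemma continuous_spaceDeriv (hf : ContDiff ℝ 1 f) : Continuous (spaceDeriv f) :=
  continuous_deriv_of_contDiff_uncurry (f := fun (z : ℝ × ℝ × ℝ) y ↦ f (z.1, y, z.2.2))
    (by simp only [Function.uncurry_def]; fun_prop) (by fun_prop)

lemma hasDerivAt_timeDeriv (hf : ContDiff ℝ 1 f) (t x p : ℝ) :
    HasDerivAt (fun s ↦ f (s, x, p)) (timeDeriv f (t, x, p)) t :=
  (show ContDiff ℝ 1 fun s ↦ f (s, x, p) by fun_prop).differentiable one_ne_zero t |>.hasDerivAt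

lemma hasDerivAt_spaceDeriv (hf : ContDiff ℝ 1 f) (t x p : ℝ) :
    HasDerivAt (fun y ↦ f (t, y, p)) (spaceDeriv f (t, x, p)) x :=
  (show ContDiff ℝ 1 fun y ↦ f (t, y, p) by fun_prop).differentiable one_ne_zero x |>.hasDerivAt

namespace HasCompactMomentumSupport

lemma of_le_abs {P : ℝ} (h : ∀ t x p, P ≤ |p| → f (t, x, p) = 0) :
    HasCompactMomentumSupport f :=
  ⟨Set.Icc (-P) P, isCompact_Icc, fun t x p hp ↦
    h t x p (lt_of_not_ge fun hle ↦ hp (abs_le.1 hle)).le⟩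

lemma hasCompactSupport (hsupp : HasCompactMomentumSupport f) (t x : ℝ) :
    HasCompactSupport fun p ↦ f (t, x, p) :=
  let ⟨_, hk, hfk⟩ := hsupp
  HasCompactSupport.intro hk fun p hp ↦ hfk t x p hp

protected lemma timeDeriv (hsupp : HasCompactMomentumSupport f) :
    HasCompactMomentumSupport (timeDeriv f) :=
  let ⟨k, hk, hfk⟩ := hsupp
  ⟨k, hk, fun t x p hp ↦ by simp only [timeDeriv, hfk _ _ p hp, deriv_const]⟩

protected lemma spaceDeriv (hsupp : HasCompactMomentumSupport f) :
    HasCompactMomentumSupport (spaceDeriv f) :=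
  let ⟨k, hk, hfk⟩ := hsupp
  ⟨k, hk, fun t x p hp ↦ by simp only [spaceDeriv, hfk _ _ p hp, deriv_const]⟩

lemma integrable_mul (hsupp : HasCompactMomentumSupport f) (hw : Continuous w)
    (hf : Continuous f) (t x : ℝ) : Integrable fun p ↦ w p * f (t, x, p) :=
  (show Continuous fun p ↦ w p * f (t, x, p) by fun_prop).integrable_of_hasCompactSupport
    (hsupp.hasCompactSupport t x).mul_left

lemma continuous_moment (hsupp : HasCompactMomentumSupport f) (hw : Continuous w)
    (hf : Continuous f) : Continuous (moment w f) := by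
  obtain ⟨k, hk, hfk⟩ := hsupp
  refine continuousOn_univ.1 <| continuousOn_integral_of_compact_support hk ?_ ?_
  · simp only [Function.uncurry_def]
    fun_prop
  · intro z p _ hp
    rw [hfk z.1 z.2 p hp, mul_zero]

lemma hasDerivAt_moment_time (hsupp : HasCompactMomentumSupport f) (hw : Continuous w)
    (hf : ContDiff ℝ 1 f) (t x : ℝ) :
    HasDerivAt (fun s ↦ moment w f (s, x)) (moment w (timeDeriv f) (t, x)) t := by
  obtain ⟨k, hk, hfk⟩ := hsupp
  have hft := continuous_timeDeriv hf
  refine hasDerivAt_integral_of_continuous_of_compact_support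
    (F' := fun s p ↦ w p * timeDeriv f (s, x, p)) hk
    (fun s p ↦ (hasDerivAt_timeDeriv hf s x p).const_mul (w p)) (fun s ↦ by fun_prop) ?_ ?_ t
  · simp only [Function.uncurry_def]
    fun_prop
  · intro s p hp
    rw [hfk s x p hp, mul_zero]

lemma hasDerivAt_moment_space (hsupp : HasCompactMomentumSupport f) (hw : Continuous w)
    (hf : ContDiff ℝ 1 f) (t x : ℝ) :
    HasDerivAt (fun y ↦ moment w f (t, y)) (moment w (spaceDeriv f) (t, x)) x := by
  obtain ⟨k, hk, hfk⟩ := hsupp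
  have hfx := continuous_spaceDeriv hf
  refine hasDerivAt_integral_of_continuous_of_compact_support
    (F' := fun y p ↦ w p * spaceDeriv f (t, y, p)) hk
    (fun y p ↦ (hasDerivAt_spaceDeriv hf t y p).const_mul (w p)) (fun y ↦ by fun_prop) ?_ ?_ x
  · simp only [Function.uncurry_def]
    fun_prop
  · intro y p hp
    rw [hfk t y p hp, mul_zero]

lemma moment_momentumDeriv (hsupp : HasCompactMomentumSupport f)
    (hw : ∀ p, HasDerivAt w (w' p) p) (hw' : Continuous w') (hf : ContDiff ℝ 1 f) (z : ℝ × ℝ) :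
    moment w (momentumDeriv f) z = -moment w' f z :=
  integral_mul_deriv_eq_neg_of_hasCompactSupport hw hw' (by fun_prop)
    (hsupp.hasCompactSupport z.1 z.2)

lemma hasDerivAt_integral_moment (hsupp : HasCompactMomentumSupport f) (hw : Continuous w)
    (hf : ContDiff ℝ 1 f) (a b t : ℝ) :
    HasDerivAt (fun s ↦ ∫ x in a..b, moment w f (s, x))
      (∫ x in a..b, moment w (timeDeriv f) (t, x)) t := by
  have hm := hsupp.continuous_moment hw hf.continuous
  have hmt := hsupp.timeDeriv.continuous_moment hw (continuous_timeDeriv hf)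
  exact hasDerivAt_intervalIntegral_of_continuous
    (F' := fun s x ↦ moment w (timeDeriv f) (s, x))
    (fun s x ↦ hsupp.hasDerivAt_moment_time hw hf s x) (fun s ↦ by fun_prop) hmt a b t

lemma integral_moment_spaceDeriv_eq_zero (hsupp : HasCompactMomentumSupport f) (hw : Continuous w)
    (hf : ContDiff ℝ 1 f) {a b t : ℝ} (hper : ∀ p, f (t, a, p) = f (t, b, p)) :
    ∫ x in a..b, moment w (spaceDeriv f) (t, x) = 0 := by
  have hmx := hsupp.spaceDeriv.continuous_moment hw (continuous_spaceDeriv hf)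
  rw [intervalIntegral.integral_eq_sub_of_hasDerivAt
    (fun x _ ↦ hsupp.hasDerivAt_moment_space hw hf t x)
    (Continuous.intervalIntegrable (by fun_prop) a b)]
  simp only [moment, hper, sub_self]

end HasCompactMomentumSupport

end Moment

namespace IsVlasovSolution

variable {v w w' : ℝ → ℝ} {F : ℝ × ℝ → ℝ} {f : ℝ × ℝ × ℝ → ℝ}

lemma force_mul_moment (hf : IsVlasovSolution v F f) (hv : Continuous v)
    (hw : ∀ p, HasDerivAt w (w' p) p) (hw' : Continuous w') (z : ℝ × ℝ) :
    F z * moment w' f z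
      = moment w (timeDeriv f) z + moment (w * v) (spaceDeriv f) z := by
  have hwc : Continuous w := continuous_iff_continuousAt.2 fun p ↦ (hw p).continuousAt
  have hsupp := hf.hasCompactMomentumSupport
  calc F z * moment w' f z
      = -F z * moment w (momentumDeriv f) z := by
        rw [hsupp.moment_momentumDeriv hw hw' hf.contDiff, neg_mul_neg]
    _ = ∫ p, (w p * timeDeriv f (z.1, z.2, p) + w p * v p * spaceDeriv f (z.1, z.2, p)) := by
        rw [moment, ← integral_const_mul]
        exact integral_congr_ae <| .of_forall fun p ↦ by
          linear_combination -(w p) * hf.vlasov z.1 z.2 p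
    _ = moment w (timeDeriv f) z + moment (w * v) (spaceDeriv f) z :=
        integral_add
          (hsupp.timeDeriv.integrable_mul hwc (continuous_timeDeriv hf.contDiff) z.1 z.2)
          (hsupp.spaceDeriv.integrable_mul (hwc.mul hv) (continuous_spaceDeriv hf.contDiff) z.1 z.2)

lemma continuous_force_mul_moment (hf : IsVlasovSolution v F f) (hv : Continuous v)
    (hw : ∀ p, HasDerivAt w (w' p) p) (hw' : Continuous w') :
    Continuous fun z ↦ F z * moment w' f z := by
  have hwc : Continuous w := continuous_iff_continuousAt.2 fun p ↦ (hw p).continuousAt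
  have hsupp := hf.hasCompactMomentumSupport
  simp only [hf.force_mul_moment hv hw hw']
  exact (hsupp.timeDeriv.continuous_moment hwc (continuous_timeDeriv hf.contDiff)).add
    (hsupp.spaceDeriv.continuous_moment (hwc.mul hv) (continuous_spaceDeriv hf.contDiff))

theorem hasDerivAt_integral_moment (hf : IsVlasovSolution v F f) (hv : Continuous v)
    (hw : ∀ p, HasDerivAt w (w' p) p) (hw' : Continuous w') {a b t : ℝ}
    (hper : ∀ p, f (t, a, p) = f (t, b, p)) :
    HasDerivAt (fun s ↦ ∫ x in a..b, moment w f (s, x))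
      (∫ x in a..b, F (t, x) * moment w' f (t, x)) t := by
  have hwc : Continuous w := continuous_iff_continuousAt.2 fun p ↦ (hw p).continuousAt
  have hsupp := hf.hasCompactMomentumSupport
  have hmt := hsupp.timeDeriv.continuous_moment hwc (continuous_timeDeriv hf.contDiff)
  have hmx := hsupp.spaceDeriv.continuous_moment (hwc.mul hv) (continuous_spaceDeriv hf.contDiff)
  refine (hsupp.hasDerivAt_integral_moment hwc hf.contDiff a b t).congr_deriv ?_
  simp only [hf.force_mul_moment hv hw hw']
  rw [intervalIntegral.integral_add (Continuous.intervalIntegrable (by fun_prop) a b)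
      (Continuous.intervalIntegrable (by fun_prop) a b),
    hsupp.integral_moment_spaceDeriv_eq_zero (hwc.mul hv) hf.contDiff hper, add_zero]

end IsVlasovSolution

lemma hasDerivAt_integral_sq_of_ampere {η : ℝ} (hη : η ≠ 0) {E j : ℝ × ℝ → ℝ}
    (hE : Continuous E) (hj : Continuous j)
    (hAmpere : ∀ t x, HasDerivAt (fun s ↦ E (s, x)) (η⁻¹ ^ 2 * j (t, x)) t) (a b t : ℝ) :
    HasDerivAt (fun s ↦ (η ^ 2 / 2) * ∫ x in a..b, E (s, x) ^ 2)
      (∫ x in a..b, E (t, x) * j (t, x)) t := by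
  have hsq : HasDerivAt (fun s ↦ ∫ x in a..b, E (s, x) ^ 2)
      (∫ x in a..b, 2 * η⁻¹ ^ 2 * (E (t, x) * j (t, x))) t := by
    refine hasDerivAt_intervalIntegral_of_continuous
      (F' := fun s x ↦ 2 * η⁻¹ ^ 2 * (E (s, x) * j (s, x)))
      (fun s x ↦ ((hAmpere s x).fun_pow 2).congr_deriv (by ring)) (fun s ↦ by fun_prop) ?_ a b t
    simp only [Function.uncurry_def]
    fun_prop
  refine (hsq.const_mul (η ^ 2 / 2)).congr_deriv ?_
  rw [intervalIntegral.integral_const_mul]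
  field_simp

/-- `K` is the kinetic energy of a particle of momentum `p`, and `G` the product `A B`. -/
theorem longitudinal_energy_evolution_general {η : ℝ} (hη : η ≠ 0) {K v : ℝ → ℝ}
    (hK : ∀ p, HasDerivAt K (v p) p) (hv : Continuous v) {E G : ℝ × ℝ → ℝ} (hE : Continuous E)
    {f : ℝ × ℝ × ℝ → ℝ} (hf : IsVlasovSolution v (fun z ↦ -(E z + G z)) f)
    (hAmpere : ∀ t x, HasDerivAt (fun s ↦ E (s, x)) (η⁻¹ ^ 2 * moment v f (t, x)) t)
    {a b t : ℝ} (hper : ∀ p, f (t, a, p) = f (t, b, p)) :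
    HasDerivAt
      (fun s ↦ (∫ x in a..b, moment K f (s, x)) + (η ^ 2 / 2) * ∫ x in a..b, E (s, x) ^ 2)
      (-∫ x in a..b, G (t, x) * moment v f (t, x)) t := by
  have hj : Continuous (moment v f) :=
    hf.hasCompactMomentumSupport.continuous_moment hv hf.contDiff.continuous
  have hpower : Continuous fun x ↦ -(E (t, x) + G (t, x)) * moment v f (t, x) :=
    (hf.continuous_force_mul_moment hv hK hv).comp (Continuous.prodMk_right t)
  refine ((hf.hasDerivAt_integral_moment hv hK hv hper).add
    (hasDerivAt_integral_sq_of_ampere hη hE hj hAmpere a b t)).congr_deriv ?_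
  rw [← intervalIntegral.integral_add (hpower.intervalIntegrable a b)
    (Continuous.intervalIntegrable (by fun_prop) a b), ← intervalIntegral.integral_neg]
  exact intervalIntegral.integral_congr fun x _ ↦ by ring

lemma hasDerivAt_sqrt_one_add_sq_sub_one (p : ℝ) :
    HasDerivAt (fun q : ℝ ↦ √(1 + q ^ 2) - 1) (p / √(1 + p ^ 2)) p := by
  have h : HasDerivAt (fun q : ℝ ↦ 1 + q ^ 2) (2 * p) p := by
    simpa using (hasDerivAt_pow 2 p).const_add 1
  refine ((h.sqrt (by positivity)).sub_const 1).congr_deriv ?_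
  field_simp

lemma continuous_div_sqrt_one_add_sq : Continuous fun p : ℝ ↦ p / √(1 + p ^ 2) :=
  continuous_id.div (by fun_prop) fun p ↦ by positivity

/-- Evolution of the longitudinal energy: under the Vlasov equation with Lorentz
force `F = −(E + A·B)` and the Ampère relation `∂E/∂t = η⁻²·j`,
`d/dt WL(t) = −∫₀¹ A·B·j dx`. -/
theorem longitudinal_energy_evolution
    (η : ℝ) (hη : 0 < η)
    (v : ℝ → ℝ) (hv : ∀ p : ℝ, v p = p / Real.sqrt (1 + p ^ 2))
    (A B E : ℝ × ℝ → ℝ) (hA : Continuous A) (hB : Continuous B)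
    (hE : ContDiff ℝ 1 E)
    (hAper : ∀ t x : ℝ, A (t, x + 1) = A (t, x))
    (hBper : ∀ t x : ℝ, B (t, x + 1) = B (t, x))
    (hEper : ∀ t x : ℝ, E (t, x + 1) = E (t, x))
    (f : ℝ × ℝ × ℝ → ℝ) (hf : ContDiff ℝ 1 f)
    (hfper : ∀ t x p : ℝ, f (t, x + 1, p) = f (t, x, p))
    (P : ℝ) (hP : 0 < P)
    (hsupp : ∀ t x p : ℝ, P ≤ |p| → f (t, x, p) = 0)
    (hPDE : ∀ t x p : ℝ,
      deriv (fun s => f (s, x, p)) t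
        + v p * deriv (fun y => f (t, y, p)) x
        + (-(E (t, x) + A (t, x) * B (t, x))) * deriv (fun q => f (t, x, q)) p
        = 0)
    (hAmpere : ∀ t x : ℝ,
      deriv (fun s => E (s, x)) t =
        η⁻¹ ^ 2 * ∫ p : ℝ, v p * f (t, x, p)) :
    ∀ t : ℝ,
      HasDerivAt (fun s =>
          (∫ x in (0:ℝ)..1, ∫ p : ℝ, (Real.sqrt (1 + p ^ 2) - 1) * f (s, x, p))
            + (η ^ 2 / 2) * ∫ x in (0:ℝ)..1, E (s, x) ^ 2)
        (-∫ x in (0:ℝ)..1, A (t, x) * B (t, x) * ∫ p : ℝ, v p * f (t, x, p))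
        t := by
  obtain rfl : v = fun p ↦ p / √(1 + p ^ 2) := funext hv
  have hAmpere' (t x : ℝ) : HasDerivAt (fun s ↦ E (s, x))
      (η⁻¹ ^ 2 * moment (fun p ↦ p / √(1 + p ^ 2)) f (t, x)) t := by
    have hdiff : Differentiable ℝ E := hE.differentiable one_ne_zero
    exact (show DifferentiableAt ℝ (fun s ↦ E (s, x)) t by fun_prop).hasDerivAt.congr_deriv
      (hAmpere t x)
  intro t
  exact longitudinal_energy_evolution_general (G := fun z ↦ A z * B z) hη.ne'
    hasDerivAt_sqrt_one_add_sq_sub_one continuous_div_sqrt_one_add_sq hE.continuous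
    ⟨hf, .of_le_abs hsupp, hPDE⟩ hAmpere' fun p ↦ by simpa using (hfper t 0 p).symm
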